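/- arXiv:1210.6410 — 2 statements merged into one kernel-verified Lean document; each statement's English description precedes it below -/
import Mathlib

section
/- The action of SL_2(ℂ) × SL_3(ℂ) × SL_3(ℂ) × ℂ^× on ℂ² ⊗ ℂ³ ⊗ ℂ³, where (g,h,k,t) acts by e ⊗ f ⊗ h' ↦ t·(ge) ⊗ (hf) ⊗ (kh') extended linearly, has exactly 18 orbits. -/
noncomputable section

open TensorProduct

/-- The space `ℂ² ⊗ ℂ³ ⊗ ℂ³`. -/
abbrev Tensor233 : Type :=
  TensorProduct ℂ (Fin 2 → ℂ) (TensorProduct ℂ (Fin 3 → ℂ) (Fin 3 → ℂ))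

/-- Two tensors are related if one is obtained from the other by the action of an
element `(g, h, k, t)` of `SL₂(ℂ) × SL₃(ℂ) × SL₃(ℂ) × ℂ^×` acting componentwise on
the tensor factors and by scaling. -/
def relT10 (v w : Tensor233) : Prop :=
  ∃ (g : Matrix.SpecialLinearGroup (Fin 2) ℂ) (h : Matrix.SpecialLinearGroup (Fin 3) ℂ)
    (k : Matrix.SpecialLinearGroup (Fin 3) ℂ) (t : ℂˣ),
    w = (t : ℂ) •
      (TensorProduct.map ((g : Matrix (Fin 2) (Fin 2) ℂ)).mulVecLin
        (TensorProduct.map ((h : Matrix (Fin 3) (Fin 3) ℂ)).mulVecLin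
          ((k : Matrix (Fin 3) (Fin 3) ℂ)).mulVecLin)) v

/-!
The two slices of a tensor in `K² ⊗ K³ ⊗ K³` span a pencil `x A + y B` of `3 × 3` matrices, and over
an algebraically closed field the scalars absorb all determinants, so the orbits are the classes of
pencils under invertible row operations, column operations and changes of the parameters `(x, y)`.

Every pencil is spanned by two matrices one of which is singular. If that one is zero, only the rank
of the other matters. If it has rank one, it is moved to `E₃₃`, and the upper left `2 × 2` block of
the other matrix is diagonalised. If it has rank two, it is moved to `E₁₁ + E₂₂`; what remains are
conjugations and shears of the other matrix, and an eigenvalue of its upper left block is shifted to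
zero.

Conversely the eighteen normal forms are distinguished by the numbers of points of rank at most `0`,
`1` and `2` on the parameter line and the dimensions of the common left and right kernels.
-/

open Matrix

theorem det_permMatrix_ne_zero {n : Type*} (K : Type*) [Field K] [Fintype n] [DecidableEq n]
    (σ : Equiv.Perm n) : (σ.permMatrix K).det ≠ 0 :=
  det_permutation (R := K) σ ▸ ((Equiv.Perm.sign σ).isUnit.map (Int.castRingHom K)).ne_zero

/-- Equivalence of the pencils `x A + y B` and `x A' + y B'` of matrices, under invertible row
operations `P`, column operations `Q` and changes `!![a, b; c, d]` of the basis of the pencil. -/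
def PencilEquiv {K m n : Type*} [Field K] [Fintype m] [DecidableEq m] [Fintype n] [DecidableEq n]
    (A B A' B' : Matrix m n K) : Prop :=
  ∃ (P : Matrix m m K) (Q : Matrix n n K) (a b c d : K), P.det ≠ 0 ∧ Q.det ≠ 0 ∧
    a * d - b * c ≠ 0 ∧ A' = P * (a • A + b • B) * Q ∧ B' = P * (c • A + d • B) * Q

namespace PencilEquiv

variable {K m n : Type*} [Field K] [Fintype m] [DecidableEq m] [Fintype n] [DecidableEq n]
  {A B A' B' A'' B'' : Matrix m n K}

theorem mul_mul {P : Matrix m m K} {Q : Matrix n n K} (hP : P.det ≠ 0) (hQ : Q.det ≠ 0)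
    (A B : Matrix m n K) : PencilEquiv A B (P * A * Q) (P * B * Q) :=
  ⟨P, Q, 1, 0, 0, 1, hP, hQ, by simp, by simp, by simp⟩

theorem mix {a b c d : K} (h : a * d - b * c ≠ 0) (A B : Matrix m n K) :
    PencilEquiv A B (a • A + b • B) (c • A + d • B) :=
  ⟨1, 1, a, b, c, d, by simp, by simp, h, by simp, by simp⟩

theorem refl (A B : Matrix m n K) : PencilEquiv A B A B := by
  simpa using mul_mul (P := 1) (Q := 1) (by simp) (by simp) A B

theorem swap (A B : Matrix m n K) : PencilEquiv A B B A := by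
  simpa using mix (a := 0) (b := 1) (c := 1) (d := 0) (by simp) A B

theorem add_smul (s : K) (A B : Matrix m n K) : PencilEquiv A B (A + s • B) B := by
  simpa using mix (a := 1) (b := s) (c := 0) (d := 1) (by simp) A B

theorem smul_smul {s t : K} (hs : s ≠ 0) (ht : t ≠ 0) (A B : Matrix m n K) :
    PencilEquiv A B (s • A) (t • B) := by
  simpa using mix (a := s) (b := 0) (c := 0) (d := t) (by simp [hs, ht]) A B

theorem trans (h : PencilEquiv A B A' B') (h' : PencilEquiv A' B' A'' B'') :
    PencilEquiv A B A'' B'' := by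
  obtain ⟨P, Q, a, b, c, d, hP, hQ, hd, rfl, rfl⟩ := h
  obtain ⟨P', Q', a', b', c', d', hP', hQ', hd', rfl, rfl⟩ := h'
  have comp (x y : K) :
      P' * (x • (P * (a • A + b • B) * Q) + y • (P * (c • A + d • B) * Q)) * Q' =
        P' * P * ((x * a + y * c) • A + (x * b + y * d) • B) * (Q * Q') := by
    simp only [Matrix.mul_add, Matrix.add_mul, Matrix.mul_smul, Matrix.smul_mul, Matrix.mul_assoc]
    module
  refine ⟨P' * P, Q * Q', _, _, _, _, ?_, ?_, ?_, comp a' b', comp c' d'⟩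
  · exact det_mul P' P ▸ mul_ne_zero hP' hP
  · exact det_mul Q Q' ▸ mul_ne_zero hQ hQ'
  · convert mul_ne_zero hd hd' using 1
    ring

theorem symm (h : PencilEquiv A B A' B') : PencilEquiv A' B' A B := by
  obtain ⟨P, Q, a, b, c, d, hP, hQ, hd, rfl, rfl⟩ := h
  have cancel (X : Matrix m n K) : P⁻¹ * (P * X * Q) * Q⁻¹ = X := by
    rw [Matrix.mul_assoc P, nonsing_inv_mul_cancel_left _ _ hP.isUnit,
      mul_nonsing_inv_cancel_right _ _ hQ.isUnit]
  have undo := mul_mul (isUnit_nonsing_inv_det _ hP.isUnit).ne_zero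
    (isUnit_nonsing_inv_det _ hQ.isUnit).ne_zero (P * (a • A + b • B) * Q) (P * (c • A + d • B) * Q)
  rw [cancel, cancel] at undo
  have unmix := mix (a := (a * d - b * c)⁻¹ * d) (b := (a * d - b * c)⁻¹ * -b)
    (c := (a * d - b * c)⁻¹ * -c) (d := (a * d - b * c)⁻¹ * a)
    (by convert inv_ne_zero hd using 1; field_simp) (a • A + b • B) (c • A + d • B)
  convert undo.trans unmix using 1 <;>
    rw [mul_smul, mul_smul, ← smul_add, eq_inv_smul_iff₀ hd] <;> module

theorem transpose (h : PencilEquiv A B A' B') : PencilEquiv Aᵀ Bᵀ A'ᵀ B'ᵀ := by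
  obtain ⟨P, Q, a, b, c, d, hP, hQ, hd, rfl, rfl⟩ := h
  exact ⟨Qᵀ, Pᵀ, a, b, c, d, by rwa [det_transpose], by rwa [det_transpose], hd,
    by simp [Matrix.mul_assoc], by simp [Matrix.mul_assoc]⟩

theorem submatrix (σ : Equiv.Perm m) (τ : Equiv.Perm n) (A B : Matrix m n K) :
    PencilEquiv A B (A.submatrix σ τ) (B.submatrix σ τ) := by
  have h := mul_mul (det_permMatrix_ne_zero K σ) (det_permMatrix_ne_zero K τ⁻¹) A B
  simp only [Equiv.Perm.permMatrix, PEquiv.toMatrix_toPEquiv_mul, PEquiv.mul_toMatrix_toPEquiv] at h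
  exact h

end PencilEquiv

section Slices

variable {K l m n : Type*} [Field K] [Fintype l] [Fintype m] [Fintype n]

variable (K l m n) in
/-- The coordinates of a tensor in `K^l ⊗ K^m ⊗ K^n` with respect to the standard basis, read as a
family of `m × n` matrices indexed by `l`. -/
def slices : (l → K) ⊗[K] ((m → K) ⊗[K] (n → K)) ≃ₗ[K] (l → Matrix m n K) :=
  haveI := Classical.decEq l
  haveI := Classical.decEq m
  haveI := Classical.decEq n
  ((Pi.basisFun K l).tensorProduct ((Pi.basisFun K m).tensorProduct (Pi.basisFun K n))).equivFun
    |>.trans (LinearEquiv.curry K K l (m × n))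
    |>.trans (LinearEquiv.piCongrRight fun _ => LinearEquiv.curry K K m n)

theorem slices_tmul (x : l → K) (y : m → K) (z : n → K) (i : l) :
    slices K l m n (x ⊗ₜ (y ⊗ₜ z)) i = x i • vecMulVec y z := by
  ext j k
  change ((Pi.basisFun K l).tensorProduct ((Pi.basisFun K m).tensorProduct
    (Pi.basisFun K n))).equivFun (x ⊗ₜ (y ⊗ₜ z)) (i, j, k) = x i * (y j * z k)
  simp [mul_comm]

theorem slices_map (g : Matrix l l K) (h : Matrix m m K) (k : Matrix n n K)
    (v : (l → K) ⊗[K] ((m → K) ⊗[K] (n → K))) (i : l) :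
    slices K l m n (TensorProduct.map g.mulVecLin (TensorProduct.map h.mulVecLin k.mulVecLin) v) i =
      h * (∑ j, g i j • slices K l m n v j) * kᵀ := by
  suffices h : (LinearMap.proj i ∘ₗ (slices K l m n).toLinearMap) ∘ₗ
      TensorProduct.map g.mulVecLin (TensorProduct.map h.mulVecLin k.mulVecLin) =
      (mulRightLinearMap m K kᵀ ∘ₗ mulLeftLinearMap n K h ∘ₗ ∑ j, g i j • LinearMap.proj j) ∘ₗ
        (slices K l m n).toLinearMap by
    simpa [Matrix.mul_sum, Matrix.sum_mul] using LinearMap.congr_fun h v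
  refine TensorProduct.ext_threefold' fun x y z => ?_
  simp [slices_tmul, mulVec_eq_sum, smul_smul, ← Finset.sum_smul, mul_vecMulVec, vecMulVec_mul,
    vecMul_transpose, mul_comm]

end Slices

theorem exists_smul_det_eq_one {K n : Type*} [Field K] [IsAlgClosed K] [Fintype n] [DecidableEq n]
    [Nonempty n] {M : Matrix n n K} (hM : M.det ≠ 0) : ∃ s : K, s ≠ 0 ∧ (s • M).det = 1 := by
  obtain ⟨s, hs⟩ := IsAlgClosed.exists_pow_nat_eq (M.det)⁻¹ (Fintype.card_pos (α := n))
  refine ⟨s, ?_, by rw [det_smul, hs, inv_mul_cancel₀ hM]⟩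
  rintro rfl
  exact inv_ne_zero hM (by rw [← hs, zero_pow Fintype.card_ne_zero])

section Orbits

variable {K l m n : Type*} [Field K] [Fintype l] [DecidableEq l] [Fintype m] [DecidableEq m]
  [Fintype n] [DecidableEq n]

/-- The orbit relation of `SL_l(K) × SL_m(K) × SL_n(K) × Kˣ` on `K^l ⊗ K^m ⊗ K^n`; over `ℂ` and in
the format `2 × 3 × 3` it is `relT10`. -/
def TensorOrbitRel (v w : (l → K) ⊗[K] ((m → K) ⊗[K] (n → K))) : Prop :=
  ∃ (g : SpecialLinearGroup l K) (h : SpecialLinearGroup m K) (k : SpecialLinearGroup n K) (t : Kˣ),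
    w = (t : K) • TensorProduct.map (g : Matrix l l K).mulVecLin
      (TensorProduct.map (h : Matrix m m K).mulVecLin (k : Matrix n n K).mulVecLin) v

theorem tensorOrbitRel_iff_pencilEquiv [IsAlgClosed K] [Nonempty m] [Nonempty n]
    (v w : (Fin 2 → K) ⊗[K] ((m → K) ⊗[K] (n → K))) :
    TensorOrbitRel v w ↔ PencilEquiv (slices K _ m n v 0) (slices K _ m n v 1)
      (slices K _ m n w 0) (slices K _ m n w 1) := by
  constructor
  · rintro ⟨g, h, k, t, rfl⟩
    refine ⟨(t : K) • (h : Matrix m m K), (k : Matrix n n K)ᵀ, g 0 0, g 0 1, g 1 0, g 1 1,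
      ?_, ?_, ?_, ?_, ?_⟩
    · simp
    · simp
    · rw [← det_fin_two, g.det_coe]
      exact one_ne_zero
    all_goals
      rw [LinearEquiv.map_smul, Pi.smul_apply, slices_map, Fin.sum_univ_two, Matrix.smul_mul,
        Matrix.smul_mul]
  · rintro ⟨P, Q, a, b, c, d, hP, hQ, hd, h0, h1⟩
    obtain ⟨p, hp, hP'⟩ := exists_smul_det_eq_one hP
    obtain ⟨q, hq, hQ'⟩ := exists_smul_det_eq_one (M := Qᵀ) (by rwa [det_transpose])
    obtain ⟨r, hr, hg'⟩ := exists_smul_det_eq_one (M := !![a, b; c, d]) (by rwa [det_fin_two_of])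
    refine ⟨⟨_, hg'⟩, ⟨_, hP'⟩, ⟨_, hQ'⟩, Units.mk0 (p * q * r)⁻¹ (by simp [hp, hq, hr]),
      (slices K _ m n).injective (funext <| Fin.forall_fin_two.2 ⟨?_, ?_⟩)⟩
    all_goals
      rw [LinearEquiv.map_smul, Pi.smul_apply, slices_map, Fin.sum_univ_two]
      simp only [h0, h1, transpose_smul, transpose_transpose, Matrix.smul_apply, Matrix.smul_mul,
        Matrix.mul_smul, smul_smul, Units.val_mk0, Matrix.mul_add, Matrix.add_mul, smul_add,
        of_apply, cons_val_zero, cons_val_one, smul_eq_mul, cons_val', cons_val_fin_one]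
      congr 2 <;> field_simp

end Orbits

section Rank

variable {K : Type*} [Field K]

theorem matrix_rank_eq_zero_iff {m n : Type*} [Fintype n] (M : Matrix m n K) :
    M.rank = 0 ↔ M = 0 := by
  classical
  rw [rank, Submodule.finrank_eq_zero, LinearMap.range_eq_bot, ← toLin'_apply',
    LinearEquiv.map_eq_zero_iff]

theorem exists_eq_vecMulVec_of_rank_le_one {m n : Type*} [Fintype n]
    {M : Matrix m n K} (h : M.rank ≤ 1) : ∃ u v, M = vecMulVec u v := by
  classical
  obtain ⟨u, hu⟩ := finrank_le_one_iff.1 h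
  choose c hc using fun j => hu ⟨M *ᵥ Pi.single j 1, LinearMap.mem_range_self _ _⟩
  refine ⟨u, c, ?_⟩
  ext i j
  have := congrFun (congrArg Subtype.val (hc j)) i
  simpa [vecMulVec_apply, mul_comm, eq_comm] using this

theorem matrix_rank_le_one_iff {m n : Type*} [Fintype n] (M : Matrix m n K) :
    M.rank ≤ 1 ↔ ∀ i i' j j', M i j * M i' j' = M i j' * M i' j := by
  constructor
  · intro h i i' j j'
    obtain ⟨u, v, rfl⟩ := exists_eq_vecMulVec_of_rank_le_one h
    simp only [vecMulVec_apply]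
    ring
  · intro h
    by_cases hM : ∃ i₀ j₀, M i₀ j₀ ≠ 0
    · obtain ⟨i₀, j₀, h₀⟩ := hM
      have : M = vecMulVec (fun i => M i j₀) ((M i₀ j₀)⁻¹ • M i₀) := by
        ext i j
        simp only [vecMulVec_apply, Pi.smul_apply, smul_eq_mul]
        field_simp
        rw [h]
      exact this ▸ rank_vecMulVec_le _ _
    · push Not at hM
      rw [show M = 0 from Matrix.ext hM, rank_zero]
      exact zero_le_one

theorem matrix_rank_le_one_iff_adjugate_eq_zero (M : Matrix (Fin 3) (Fin 3) K) :
    M.rank ≤ 1 ↔ M.adjugate = 0 := by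
  rw [matrix_rank_le_one_iff, adjugate_fin_three, ← Matrix.ext_iff]
  constructor
  · intro h
    simp [Fin.forall_fin_succ, h 0 1, h 0 2, h 1 2]
  · simp only [Fin.forall_fin_succ]
    simp [sub_eq_zero]
    grind

theorem exists_mul_mul_eq_of_rank_eq {n : Type*} [Fintype n] [DecidableEq n] {M N : Matrix n n K}
    (h : M.rank = N.rank) : ∃ P Q : Matrix n n K, P.det ≠ 0 ∧ Q.det ≠ 0 ∧ P * M * Q = N := by
  obtain ⟨V, U, e, hV, hU, hM⟩ := M.exists_rank_normal_form
  obtain ⟨V', U', e', hV', hU', hN⟩ := N.exists_rank_normal_form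
  generalize M.rank = r at *
  subst h
  rw [isUnit_iff_isUnit_det] at hV hU hV' hU'
  let σ : Equiv.Perm n := e'.trans e.symm
  have hσ : σ.permMatrix K * (V * M * U) * Equiv.Perm.permMatrix K σ.symm = V' * N * U' := by
    rw [hM, hN, Equiv.Perm.permMatrix, Equiv.Perm.permMatrix, PEquiv.toMatrix_toPEquiv_mul,
      PEquiv.mul_toMatrix_toPEquiv]
    ext i j
    simp [σ]
  refine ⟨V'⁻¹ * σ.permMatrix K * V, U * Equiv.Perm.permMatrix K σ.symm * U'⁻¹, ?_, ?_, ?_⟩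
  · rw [det_mul, det_mul]
    exact mul_ne_zero (mul_ne_zero (isUnit_nonsing_inv_det _ hV').ne_zero
      (det_permMatrix_ne_zero K σ)) hV.ne_zero
  · rw [det_mul, det_mul]
    exact mul_ne_zero (mul_ne_zero hU.ne_zero (det_permMatrix_ne_zero K _))
      (isUnit_nonsing_inv_det _ hU').ne_zero
  · calc _ = V'⁻¹ * (σ.permMatrix K * (V * M * U) * Equiv.Perm.permMatrix K σ.symm) * U'⁻¹ := by
          simp only [Matrix.mul_assoc]
      _ = N := by
          rw [hσ, Matrix.mul_assoc V', nonsing_inv_mul_cancel_left _ _ hV',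
            mul_nonsing_inv_cancel_right _ _ hU']

theorem rank_diagonal_ite_mem {n : Type*} [Fintype n] [DecidableEq n] (s : Finset n) :
    (diagonal fun i => if i ∈ s then (1 : K) else 0).rank = s.card := by
  classical
  rw [rank_diagonal, Fintype.card_subtype]
  simp

theorem exists_mul_mul_eq_diagonal_ite_mem {n : Type*} [Fintype n] [DecidableEq n]
    {M : Matrix n n K} {s : Finset n} (h : M.rank = s.card) :
    ∃ P Q : Matrix n n K, P.det ≠ 0 ∧ Q.det ≠ 0 ∧
      P * M * Q = diagonal fun i => if i ∈ s then (1 : K) else 0 :=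
  exists_mul_mul_eq_of_rank_eq (h.trans (rank_diagonal_ite_mem s).symm)

theorem rank_lt_card_iff_det_eq_zero {n : Type*} [Fintype n] [DecidableEq n] (M : Matrix n n K) :
    M.rank < Fintype.card n ↔ M.det = 0 := by
  refine ⟨fun h => by_contra fun hM => h.ne (rank_of_det_ne_zero hM), fun h => ?_⟩
  refine M.rank_le_card_width.lt_of_ne fun hr => ?_
  obtain ⟨P, Q, -, -, hPQ⟩ := exists_mul_mul_eq_of_rank_eq (N := (1 : Matrix n n K))
    (hr.trans rank_one.symm)
  simpa [h] using congrArg det hPQ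

end Rank

open scoped LinearAlgebra.Projectivization

section LowRankPoints

variable {K m n : Type*} [Field K] [Fintype n] {A B A' B' : Matrix m n K}

/-- The points `[x : y]` of the projective line at which the member `x A + y B` of the pencil has
rank at most `r`. -/
def lowRankPoints (r : ℕ) (A B : Matrix m n K) : Set (ℙ K (Fin 2 → K)) :=
  {p | (p.rep 0 • A + p.rep 1 • B).rank ≤ r}

theorem mk_mem_lowRankPoints {r : ℕ} {v : Fin 2 → K} (hv : v ≠ 0) :
    Projectivization.mk K v hv ∈ lowRankPoints r A B ↔ (v 0 • A + v 1 • B).rank ≤ r := by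
  obtain ⟨a, ha⟩ := Projectivization.exists_smul_eq_mk_rep K v hv
  have : (a • v) 0 • A + (a • v) 1 • B = (a : K) • (v 0 • A + v 1 • B) := by
    simp only [Pi.smul_apply, Units.smul_def, smul_eq_mul]
    module
  rw [lowRankPoints, Set.mem_ofPred_eq, ← ha, this,
    rank_smul_of_mem_nonZeroDivisors _ (mem_nonZeroDivisors_of_ne_zero a.ne_zero)]

theorem mk_eq_mk_iff_mul_eq_mul {v w : Fin 2 → K} (hv : v ≠ 0) (hw : w ≠ 0) :
    Projectivization.mk K v hv = Projectivization.mk K w hw ↔ v 0 * w 1 = v 1 * w 0 := by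
  rw [Projectivization.mk_eq_mk_iff']
  constructor
  · rintro ⟨a, rfl⟩
    simp only [Pi.smul_apply, smul_eq_mul]
    ring
  · intro h
    by_cases hw₀ : w 0 = 0
    · have hw₁ : w 1 ≠ 0 := fun hw₁ => hw (funext (Fin.forall_fin_two.2 ⟨hw₀, hw₁⟩))
      have hv₀ : v 0 = 0 := by simpa [hw₀, hw₁] using h
      exact ⟨v 1 / w 1, funext (Fin.forall_fin_two.2 ⟨by simp [hw₀, hv₀], by simp [hw₁]⟩)⟩
    · refine ⟨v 0 / w 0, funext (Fin.forall_fin_two.2 ⟨by simp [hw₀], ?_⟩)⟩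
      rw [Pi.smul_apply, smul_eq_mul, div_mul_eq_mul_div, h, mul_div_cancel_right₀ _ hw₀]

theorem lowRankPoints_eq_univ {r : ℕ}
    (h : ∀ v : Fin 2 → K, v ≠ 0 → (v 0 • A + v 1 • B).rank ≤ r) :
    lowRankPoints r A B = Set.univ :=
  Set.eq_univ_of_forall fun p => h p.rep p.rep_nonzero

theorem encard_lowRankPoints {r k : ℕ} {p : Fin k → Fin 2 → K} (hp : ∀ i, p i ≠ 0)
    (hp' : Pairwise fun i j => p i 0 * p j 1 ≠ p i 1 * p j 0)
    (h : ∀ v : Fin 2 → K, v ≠ 0 →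
      ((v 0 • A + v 1 • B).rank ≤ r ↔ ∃ i, v 0 * p i 1 = v 1 * p i 0)) :
    (lowRankPoints r A B).encard = k := by
  have hinj : Function.Injective fun i => Projectivization.mk K (p i) (hp i) := fun i j hij =>
    by_contra fun hne => hp' hne ((mk_eq_mk_iff_mul_eq_mul _ _).1 hij)
  have hrange : lowRankPoints r A B = Set.range fun i => Projectivization.mk K (p i) (hp i) := by
    ext q
    induction q using Projectivization.ind with
    | h v hv =>
      simp only [mk_mem_lowRankPoints, h v hv, Set.mem_range, mk_eq_mk_iff_mul_eq_mul, eq_comm]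
  rw [hrange, ← Set.image_univ, hinj.encard_image, Set.encard_univ,
    ENat.card_eq_coe_fintype_card, Fintype.card_fin]

variable [Fintype m] [DecidableEq m] [DecidableEq n]

theorem PencilEquiv.encard_lowRankPoints_le (h : PencilEquiv A B A' B') (r : ℕ) :
    (lowRankPoints r A' B').encard ≤ (lowRankPoints r A B).encard := by
  obtain ⟨P, Q, a, b, c, d, hP, hQ, hd, rfl, rfl⟩ := h
  have hinj : Function.Injective !![a, b; c, d].vecMulLinear :=
    vecMul_injective_of_isUnit <| (isUnit_iff_isUnit_det _).2 <| by
      rwa [det_fin_two_of, isUnit_iff_ne_zero]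
  refine Set.encard_le_encard_of_injOn (f := Projectivization.map _ hinj) (fun p => ?_)
    (Projectivization.map_injective _ _).injOn
  induction p using Projectivization.ind with
  | h v hv =>
    rw [Projectivization.map_mk, mk_mem_lowRankPoints, mk_mem_lowRankPoints]
    have hmem : v 0 • (P * (a • A + b • B) * Q) + v 1 • (P * (c • A + d • B) * Q) =
        P * ((v ᵥ* !![a, b; c, d]) 0 • A + (v ᵥ* !![a, b; c, d]) 1 • B) * Q := by
      simp only [vecMul_eq_sum, Fin.sum_univ_two, Pi.add_apply, Pi.smul_apply, of_apply,
        cons_val_zero, cons_val_one, smul_eq_mul, Matrix.mul_add, Matrix.add_mul, Matrix.mul_smul,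
        Matrix.smul_mul]
      module
    rw [hmem, rank_mul_eq_left_of_isUnit_det _ _ hQ.isUnit,
      rank_mul_eq_right_of_isUnit_det _ _ hP.isUnit]
    exact id

theorem PencilEquiv.encard_lowRankPoints_eq (h : PencilEquiv A B A' B') (r : ℕ) :
    (lowRankPoints r A B).encard = (lowRankPoints r A' B').encard :=
  (h.symm.encard_lowRankPoints_le r).antisymm (h.encard_lowRankPoints_le r)

end LowRankPoints

section CommonKernel

variable {K m n : Type*} [Field K] [Fintype n]

/-- The vectors annihilated by every member of the pencil. -/
def commonKernel (A B : Matrix m n K) : Submodule K (n → K) :=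
  LinearMap.ker A.mulVecLin ⊓ LinearMap.ker B.mulVecLin

theorem finrank_commonKernel {A B : Matrix m n K} {s : Finset n}
    (h : ∀ v, A *ᵥ v = 0 ∧ B *ᵥ v = 0 ↔ ∀ i ∉ s, v i = 0) :
    Module.finrank K (commonKernel A B) = s.card := by
  have : commonKernel A B = Pi.spanSubset K (s : Set n) := by
    ext v
    simp [commonKernel, h, Pi.mem_spanSubset_iff]
  rw [this, Pi.dim_spanSubset, Set.ncard_coe_finset]

variable [Fintype m] [DecidableEq m] [DecidableEq n] {A B A' B' : Matrix m n K}

theorem PencilEquiv.finrank_commonKernel_le (h : PencilEquiv A B A' B') :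
    Module.finrank K (commonKernel A B) ≤ Module.finrank K (commonKernel A' B') := by
  obtain ⟨P, Q, a, b, c, d, -, hQ, -, rfl, rfl⟩ := h
  have hinj : Function.Injective Q⁻¹.mulVecLin :=
    mulVec_injective_of_isUnit ((isUnit_nonsing_inv_iff).2 ((isUnit_iff_isUnit_det _).2 hQ.isUnit))
  rw [(Submodule.equivMapOfInjective _ hinj _).finrank_eq]
  refine Submodule.finrank_mono ?_
  rintro _ ⟨v, ⟨hA, hB⟩, rfl⟩
  have cancel (x y : K) : (P * (x • A + y • B) * Q) *ᵥ (Q⁻¹ *ᵥ v) = 0 := by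
    rw [mulVec_mulVec, mul_nonsing_inv_cancel_right _ _ hQ.isUnit, ← mulVec_mulVec, add_mulVec,
      smul_mulVec, smul_mulVec, show A *ᵥ v = 0 from hA, show B *ᵥ v = 0 from hB, smul_zero,
      smul_zero, add_zero, mulVec_zero]
  exact ⟨cancel a b, cancel c d⟩

theorem PencilEquiv.finrank_commonKernel_eq (h : PencilEquiv A B A' B') :
    Module.finrank K (commonKernel A B) = Module.finrank K (commonKernel A' B') :=
  h.finrank_commonKernel_le.antisymm h.symm.finrank_commonKernel_le

end CommonKernel

section NormalForms

variable (K : Type*) [Field K]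

/-- The spanning matrices `(A, B)` of the normal forms `x A + y B` of pencils of `3 × 3` matrices.
Numbers 0–3 are spanned by a single matrix; of the others, 4–11 have a member of rank one, while
12–17 have one of rank two but none of rank one. -/
def normalForm : Fin 18 → Matrix (Fin 3) (Fin 3) K × Matrix (Fin 3) (Fin 3) K := ![
  (0, 0),
  (!![0, 0, 0; 0, 0, 0; 0, 0, 1], 0),
  (!![1, 0, 0; 0, 1, 0; 0, 0, 0], 0),
  (1, 0),
  (!![0, 0, 1; 0, 0, 0; 0, 0, 0], !![0, 0, 0; 0, 0, 0; 0, 0, 1]),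
  (!![0, 0, 0; 0, 0, 0; 1, 0, 0], !![0, 0, 0; 0, 0, 0; 0, 0, 1]),
  (!![0, 0, 1; 0, 0, 0; 1, 0, 0], !![0, 0, 0; 0, 0, 0; 0, 0, 1]),
  (!![0, 0, 0; 0, 1, 0; 0, 0, 0], !![0, 0, 0; 0, 0, 0; 0, 0, 1]),
  (!![0, 0, 1; 0, 1, 0; 0, 0, 0], !![0, 0, 0; 0, 0, 0; 0, 0, 1]),
  (!![0, 0, 0; 0, 1, 0; 1, 0, 0], !![0, 0, 0; 0, 0, 0; 0, 0, 1]),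
  (!![0, 0, 1; 0, 1, 0; 1, 0, 0], !![0, 0, 0; 0, 0, 0; 0, 0, 1]),
  (!![1, 0, 0; 0, 1, 0; 0, 0, 0], !![0, 0, 0; 0, 0, 0; 0, 0, 1]),
  (!![0, 0, 1; 1, 0, 0; 0, 0, 0], !![1, 0, 0; 0, 1, 0; 0, 0, 0]),
  (!![0, 1, 0; 0, 0, 0; 1, 0, 0], !![1, 0, 0; 0, 1, 0; 0, 0, 0]),
  (!![0, 0, 1; 0, 0, 0; 0, 1, 0], !![1, 0, 0; 0, 1, 0; 0, 0, 0]),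
  (!![0, 0, 1; 1, 0, 0; 0, 1, 0], !![1, 0, 0; 0, 1, 0; 0, 0, 0]),
  (!![0, 1, 0; 0, 0, 0; 0, 0, 1], !![1, 0, 0; 0, 1, 0; 0, 0, 0]),
  (!![1, 0, 0; 0, 0, 0; 0, 0, 1], !![1, 0, 0; 0, 1, 0; 0, 0, 0])]

/-- Binary forms, evaluated at `v = (x, y)`: the low rank points of every normal form are the zeros
of one of these. The form number `j ≤ 3` has `j` zeros on the projective line. -/
def rankForm (v : Fin 2 → K) : Fin 5 → K :=
  ![1, v 0, v 0 * v 1, v 0 * v 1 * (v 0 + v 1), 0]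

variable {K} in
theorem encard_lowRankPoints_of_rankForm [Infinite K] {m n : Type*} [Fintype n] {A B : Matrix m n K}
    {r : ℕ} {j : Fin 5}
    (h : ∀ v : Fin 2 → K, v ≠ 0 → ((v 0 • A + v 1 • B).rank ≤ r ↔ rankForm K v j = 0)) :
    (lowRankPoints r A B).encard = (![0, 1, 2, 3, ⊤] j : ℕ∞) := by
  fin_cases j
  · exact encard_lowRankPoints (p := (![] : Fin 0 → Fin 2 → K)) (by simp) (by simp [Pairwise])
      (by simpa [rankForm] using h)
  · exact encard_lowRankPoints (p := ![![0, 1]]) (by simp) (by simp [Pairwise])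
      (by simpa [rankForm] using h)
  · exact encard_lowRankPoints (p := ![![0, 1], ![1, 0]]) (by simp [Fin.forall_fin_succ])
      (by simp [Pairwise, Fin.forall_fin_succ])
      (by simpa [rankForm, Fin.exists_fin_succ, eq_comm] using h)
  · exact encard_lowRankPoints (p := ![![0, 1], ![1, 0], ![1, -1]]) (by simp [Fin.forall_fin_succ])
      (by simp [Pairwise, Fin.forall_fin_succ])
      (by simpa [rankForm, Fin.exists_fin_succ, neg_eq_iff_add_eq_zero, eq_comm, or_assoc] using h)
  · classical
    have : Infinite (ℙ K (Fin 2 → K)) :=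
      (OnePoint.equivProjectivization K).infinite_iff.1 inferInstance
    rw [lowRankPoints_eq_univ fun v hv => (h v hv).2 rfl, Set.encard_univ,
      ENat.card_eq_top_of_infinite]
    rfl

/-- The number of the form of `rankForm` whose zeros are the points of rank at most `r` of the
`i`-th normal form. -/
def rankFormIndex : Fin 3 → Fin 18 → Fin 5 := ![
  ![4, 1, 1, 1, 0, 0, 0, 0, 0, 0, 0, 0, 0, 0, 0, 0, 0, 0],
  ![4, 4, 1, 1, 4, 4, 1, 2, 1, 1, 1, 1, 0, 0, 0, 0, 0, 0],
  ![4, 4, 4, 1, 4, 4, 4, 4, 4, 4, 1, 2, 4, 4, 4, 1, 2, 3]]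

theorem rank_normalForm_le_zero_iff (i : Fin 18) (v : Fin 2 → K) (hv : v ≠ 0) :
    (v 0 • (normalForm K i).1 + v 1 • (normalForm K i).2).rank ≤ 0 ↔
      rankForm K v (rankFormIndex 0 i) = 0 := by
  have h₀ : v 0 = 0 → v 1 ≠ 0 := fun h₀ h₁ => hv (funext (Fin.forall_fin_two.2 ⟨h₀, h₁⟩))
  rw [Nat.le_zero, matrix_rank_eq_zero_iff]
  fin_cases i <;>
    simp [normalForm, rankFormIndex, rankForm, ← Matrix.ext_iff, Fin.forall_fin_succ] <;> grind

theorem rank_normalForm_le_one_iff (i : Fin 18) (v : Fin 2 → K) (hv : v ≠ 0) :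
    (v 0 • (normalForm K i).1 + v 1 • (normalForm K i).2).rank ≤ 1 ↔
      rankForm K v (rankFormIndex 1 i) = 0 := by
  have h₀ : v 0 = 0 → v 1 ≠ 0 := fun h₀ h₁ => hv (funext (Fin.forall_fin_two.2 ⟨h₀, h₁⟩))
  rw [matrix_rank_le_one_iff_adjugate_eq_zero, adjugate_fin_three, ← Matrix.ext_iff]
  simp only [Fin.forall_fin_succ]
  fin_cases i <;>
    simp [normalForm, rankFormIndex, rankForm, or_comm] <;> grind

theorem rank_normalForm_le_two_iff (i : Fin 18) (v : Fin 2 → K) :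
    (v 0 • (normalForm K i).1 + v 1 • (normalForm K i).2).rank ≤ 2 ↔
      rankForm K v (rankFormIndex 2 i) = 0 := by
  have hdet := rank_lt_card_iff_det_eq_zero (v 0 • (normalForm K i).1 + v 1 • (normalForm K i).2)
  rw [Fintype.card_fin, Nat.lt_succ_iff] at hdet
  rw [hdet, det_fin_three]
  fin_cases i <;> simp [normalForm, rankFormIndex, rankForm, or_comm]; grind

theorem encard_lowRankPoints_normalForm [Infinite K] (r : Fin 3) (i : Fin 18) :
    (lowRankPoints r (normalForm K i).1 (normalForm K i).2).encard =
      (![0, 1, 2, 3, ⊤] (rankFormIndex r i) : ℕ∞) := by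
  refine encard_lowRankPoints_of_rankForm ?_
  fin_cases r
  · exact rank_normalForm_le_zero_iff K i
  · exact rank_normalForm_le_one_iff K i
  · exact fun v _ => rank_normalForm_le_two_iff K i v

/-- The coordinates which are unconstrained on the common kernel of the `i`-th normal form. -/
def freeCoordinates : Fin 18 → Finset (Fin 3) :=
  ![{0, 1, 2}, {0, 1}, {2}, ∅, {0, 1}, {1}, {1}, {0}, {0}, ∅, ∅, ∅, ∅, {2}, ∅, ∅, ∅, ∅]

theorem finrank_commonKernel_normalForm (i : Fin 18) :
    Module.finrank K (commonKernel (normalForm K i).1 (normalForm K i).2) =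
      (freeCoordinates i).card := by
  refine finrank_commonKernel fun v => ?_
  fin_cases i <;>
    simp [normalForm, freeCoordinates, funext_iff, mulVec_eq_sum, Fin.sum_univ_three, one_fin_three,
      Fin.forall_fin_succ] <;> grind

/-- The involution of the list of normal forms induced by transposition of matrices. -/
def transposeIndex : Equiv.Perm (Fin 18) :=
  Equiv.swap 4 5 * Equiv.swap 8 9 * Equiv.swap 12 13

theorem pencilEquiv_transpose_normalForm (i : Fin 18) :
    PencilEquiv (normalForm K i).1ᵀ (normalForm K i).2ᵀ
      (normalForm K (transposeIndex i)).1 (normalForm K (transposeIndex i)).2 := by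
  let τ : Equiv.Perm (Fin 3) := if i ∈ ({14, 15, 16} : Finset (Fin 18)) then .swap 0 1 else 1
  have h₁ : (normalForm K (transposeIndex i)).1 = (normalForm K i).1ᵀ.submatrix τ τ := by
    ext a b
    fin_cases i <;> fin_cases a <;> fin_cases b <;> rfl
  have h₂ : (normalForm K (transposeIndex i)).2 = (normalForm K i).2ᵀ.submatrix τ τ := by
    ext a b
    fin_cases i <;> fin_cases a <;> fin_cases b <;> rfl
  exact h₁ ▸ h₂ ▸ .submatrix τ τ _ _

theorem eq_of_pencilEquiv_normalForm [Infinite K] {i j : Fin 18}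
    (h : PencilEquiv (normalForm K i).1 (normalForm K i).2 (normalForm K j).1 (normalForm K j).2) :
    i = j := by
  have hrank (r : Fin 3) : rankFormIndex r i = rankFormIndex r j := by
    have := h.encard_lowRankPoints_eq r
    rw [encard_lowRankPoints_normalForm, encard_lowRankPoints_normalForm] at this
    revert this
    generalize rankFormIndex r i = a, rankFormIndex r j = b
    revert a b
    decide
  have hker : (freeCoordinates i).card = (freeCoordinates j).card := by
    simpa only [finrank_commonKernel_normalForm] using h.finrank_commonKernel_eq
  have hker' : (freeCoordinates (transposeIndex i)).card =
      (freeCoordinates (transposeIndex j)).card := by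
    have := (((pencilEquiv_transpose_normalForm K i).symm.trans h.transpose).trans
      (pencilEquiv_transpose_normalForm K j)).finrank_commonKernel_eq
    simpa only [finrank_commonKernel_normalForm] using this
  clear h
  revert i j
  decide

end NormalForms

section Bordered

variable {R : Type*}

/-- The block matrix with upper left `2 × 2` block `M`, last column `(u, e)` and last row
`(v, e)`. -/
def bordered (M : Matrix (Fin 2) (Fin 2) R) (u v : Fin 2 → R) (e : R) : Matrix (Fin 3) (Fin 3) R :=
  !![M 0 0, M 0 1, u 0; M 1 0, M 1 1, u 1; v 0, v 1, e]

theorem exists_eq_bordered (A : Matrix (Fin 3) (Fin 3) R) : ∃ M u v e, A = bordered M u v e :=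
  ⟨!![A 0 0, A 0 1; A 1 0, A 1 1], ![A 0 2, A 1 2], ![A 2 0, A 2 1], A 2 2, eta_fin_three A⟩

theorem transpose_bordered (M : Matrix (Fin 2) (Fin 2) R) (u v : Fin 2 → R) (e : R) :
    (bordered M u v e)ᵀ = bordered Mᵀ v u e := by
  ext i j
  fin_cases i <;> fin_cases j <;> rfl

variable [CommRing R]

theorem bordered_mul_bordered (M M' : Matrix (Fin 2) (Fin 2) R) (u v u' v' : Fin 2 → R)
    (e e' : R) : bordered M u v e * bordered M' u' v' e' =
      bordered (M * M' + vecMulVec u v') (M *ᵥ u' + e' • u) (v ᵥ* M' + e • v')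
        (v ⬝ᵥ u' + e * e') := by
  ext i j
  fin_cases i <;> fin_cases j <;>
    simp [bordered, Matrix.mul_apply, Fin.sum_univ_succ, vecMulVec_apply, vecMul,
      dotProduct] <;> ring

theorem bordered_add_smul_bordered (M M' : Matrix (Fin 2) (Fin 2) R) (u v u' v' : Fin 2 → R)
    (e e' s : R) : bordered M u v e + s • bordered M' u' v' e' =
      bordered (M + s • M') (u + s • u') (v + s • v') (e + s * e') := by
  ext i j
  fin_cases i <;> fin_cases j <;> simp [bordered]

theorem det_bordered_zero_row (M : Matrix (Fin 2) (Fin 2) R) (u : Fin 2 → R) (e : R) :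
    (bordered M u 0 e).det = M.det * e := by
  simp [bordered, det_fin_three, det_fin_two]
  ring

theorem det_bordered_zero_column (M : Matrix (Fin 2) (Fin 2) R) (v : Fin 2 → R) (e : R) :
    (bordered M 0 v e).det = M.det * e := by
  rw [← det_transpose, transpose_bordered, det_bordered_zero_row, det_transpose]

end Bordered

section HasNormalForm

variable {K : Type*} [Field K] {A B A' B' : Matrix (Fin 3) (Fin 3) K}

/-- The pencil `x A + y B` is equivalent to one of the eighteen normal forms. -/
def HasNormalForm (A B : Matrix (Fin 3) (Fin 3) K) : Prop :=
  ∃ i, PencilEquiv A B (normalForm K i).1 (normalForm K i).2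

theorem hasNormalForm_of_eq (i : Fin 18) (hA : A = (normalForm K i).1)
    (hB : B = (normalForm K i).2) : HasNormalForm A B :=
  ⟨i, hA ▸ hB ▸ .refl _ _⟩

theorem PencilEquiv.hasNormalForm (h : PencilEquiv A B A' B') (h' : HasNormalForm A' B') :
    HasNormalForm A B :=
  let ⟨i, hi⟩ := h'
  ⟨i, h.trans hi⟩

theorem HasNormalForm.of_transpose (h : HasNormalForm Aᵀ Bᵀ) : HasNormalForm A B :=
  let ⟨i, hi⟩ := h
  ⟨transposeIndex i, hi.transpose.trans (pencilEquiv_transpose_normalForm K i)⟩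

end HasNormalForm

section RankOneMember

variable {K : Type*} [Field K]

theorem hasNormalForm_zero (A : Matrix (Fin 3) (Fin 3) K) : HasNormalForm A 0 := by
  obtain ⟨i, s, hs, hi⟩ : ∃ (i : Fin 18) (s : Finset (Fin 3)), A.rank = s.card ∧
      ((diagonal fun j => if j ∈ s then (1 : K) else 0), 0) = normalForm K i := by
    have : A.rank ≤ 3 := A.rank_le_width
    interval_cases A.rank
    exacts [⟨0, ∅, rfl, by ext a b <;> fin_cases a <;> fin_cases b <;> rfl⟩,
      ⟨1, {2}, rfl, by ext a b <;> fin_cases a <;> fin_cases b <;> rfl⟩,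
      ⟨2, {0, 1}, rfl, by ext a b <;> fin_cases a <;> fin_cases b <;> rfl⟩,
      ⟨3, Finset.univ, rfl, by ext a b <;> fin_cases a <;> fin_cases b <;> rfl⟩]
  obtain ⟨P, Q, hP, hQ, hPQ⟩ := exists_mul_mul_eq_diagonal_ite_mem hs
  refine (PencilEquiv.mul_mul hP hQ A 0).hasNormalForm (hasNormalForm_of_eq i ?_ ?_)
  · rw [← hi, hPQ]
  · rw [← hi, Matrix.mul_zero, Matrix.zero_mul]

theorem pencilEquiv_bordered_corner {h k : Matrix (Fin 2) (Fin 2) K} (hh : h.det ≠ 0)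
    (hk : k.det ≠ 0) (w w' : Fin 2 → K) (E : Matrix (Fin 2) (Fin 2) K) (u v : Fin 2 → K) (e : K) :
    PencilEquiv (bordered E u v e) (bordered 0 0 0 1)
      (bordered (h * E * k) (h *ᵥ (E *ᵥ w' + u)) ((w ᵥ* E + v) ᵥ* k) 0) (bordered 0 0 0 1) := by
  have hP : (bordered h 0 w 1).det ≠ 0 := by simpa [det_bordered_zero_column] using hh
  have hQ : (bordered k w' 0 1).det ≠ 0 := by simpa [det_bordered_zero_row] using hk
  have hA : bordered h 0 w 1 * bordered E u v e * bordered k w' 0 1 =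
      bordered (h * E * k) (h *ᵥ (E *ᵥ w' + u)) ((w ᵥ* E + v) ᵥ* k)
        ((w ᵥ* E + v) ⬝ᵥ w' + (w ⬝ᵥ u + e)) := by
    simp only [bordered_mul_bordered, zero_vecMulVec, vecMulVec_zero, smul_zero, one_smul, one_mul,
      mul_one, add_zero, mulVec_add, mulVec_mulVec]
  have hB : bordered h 0 w 1 * bordered 0 0 0 1 * bordered k w' 0 1 = bordered 0 0 0 1 := by
    simp only [bordered_mul_bordered, vecMulVec_zero, smul_zero, mul_one,
      add_zero, zero_add, Matrix.mul_zero, Matrix.zero_mul, mulVec_zero, vecMul_zero, zero_vecMul,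
      zero_mulVec, dotProduct_zero, zero_dotProduct]
  have hmul := PencilEquiv.mul_mul hP hQ (bordered E u v e) (bordered 0 0 0 1)
  rw [hA, hB] at hmul
  convert hmul.trans (.add_smul (-((w ᵥ* E + v) ⬝ᵥ w' + (w ⬝ᵥ u + e))) _ _) using 1
  simp only [bordered_add_smul_bordered, smul_zero, add_zero, mul_one, add_neg_cancel]

theorem exists_mulVec_eq {u : Fin 2 → K} (hu : u ≠ 0) :
    ∃ g : Matrix (Fin 2) (Fin 2) K, g.det ≠ 0 ∧ g *ᵥ u = ![1, 0] := by
  by_cases h₀ : u 0 = 0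
  · have h₁ : u 1 ≠ 0 := fun h₁ => hu (funext (Fin.forall_fin_two.2 ⟨h₀, h₁⟩))
    refine ⟨!![0, (u 1)⁻¹; 1, 0], by simp [h₁], ?_⟩
    ext i
    fin_cases i <;> simp [h₀, h₁, mulVec, dotProduct, Fin.sum_univ_two]
  · refine ⟨!![(u 0)⁻¹, 0; -u 1, u 0], by simp [h₀], ?_⟩
    ext i
    fin_cases i <;> simp [h₀, mulVec, dotProduct, Fin.sum_univ_two, mul_comm]

theorem exists_mulVec_eq_zero_or (u : Fin 2 → K) :
    ∃ g : Matrix (Fin 2) (Fin 2) K, g.det ≠ 0 ∧ (g *ᵥ u = 0 ∨ g *ᵥ u = ![1, 0]) := by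
  by_cases hu : u = 0
  · exact ⟨1, by simp, Or.inl (by simp [hu])⟩
  · obtain ⟨g, hg, hgu⟩ := exists_mulVec_eq hu
    exact ⟨g, hg, Or.inr hgu⟩

theorem exists_mul_eq_zero_or_one (x : K) : ∃ p : K, p ≠ 0 ∧ (p * x = 0 ∨ p * x = 1) := by
  by_cases hx : x = 0
  · exact ⟨1, one_ne_zero, Or.inl (by simp [hx])⟩
  · exact ⟨x⁻¹, inv_ne_zero hx, Or.inr (inv_mul_cancel₀ hx)⟩

theorem hasNormalForm_corner_of_zero (u v : Fin 2 → K) (e : K) :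
    HasNormalForm (bordered 0 u v e) (bordered 0 0 0 1) := by
  obtain ⟨g, hg, hu⟩ := exists_mulVec_eq_zero_or u
  obtain ⟨k, hk, hv⟩ := exists_mulVec_eq_zero_or v
  refine (pencilEquiv_bordered_corner hg (k := kᵀ) (by rwa [det_transpose]) 0 0 0 u v
    e).hasNormalForm ?_
  rw [Matrix.mul_zero, Matrix.zero_mul, zero_mulVec, zero_add, zero_vecMul, zero_add,
    vecMul_transpose]
  rcases hu with hu | hu <;> rcases hv with hv | hv <;> rw [hu, hv]
  · exact (PencilEquiv.swap _ _).hasNormalForm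
      (hasNormalForm_of_eq 1 rfl (by ext i j; fin_cases i <;> fin_cases j <;> rfl))
  · exact hasNormalForm_of_eq 5 rfl (by simp [bordered, normalForm])
  · exact hasNormalForm_of_eq 4 rfl rfl
  · exact hasNormalForm_of_eq 6 rfl rfl

theorem hasNormalForm_corner_of_rank_one (u v : Fin 2 → K) (e : K) :
    HasNormalForm (bordered !![0, 0; 0, 1] u v e) (bordered 0 0 0 1) := by
  obtain ⟨p, hp, hu⟩ := exists_mul_eq_zero_or_one (u 0)
  obtain ⟨q, hq, hv⟩ := exists_mul_eq_zero_or_one (v 0)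
  refine (pencilEquiv_bordered_corner (h := !![p, 0; 0, 1]) (k := !![q, 0; 0, 1]) (by simpa)
    (by simpa) ![0, -v 1] ![0, -u 1] _ u v e).hasNormalForm ?_
  have hu' : !![p, 0; 0, 1] *ᵥ (!![0, 0; 0, 1] *ᵥ ![0, -u 1] + u) = ![p * u 0, 0] := by
    ext i
    fin_cases i <;> simp [mulVec, dotProduct, Fin.sum_univ_two]
  have hv' : (![0, -v 1] ᵥ* !![0, 0; 0, 1] + v) ᵥ* !![q, 0; 0, 1] = ![q * v 0, 0] := by
    ext i
    fin_cases i <;> simp [vecMul, dotProduct, Fin.sum_univ_two, mul_comm]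
  have hE : !![p, 0; 0, 1] * !![0, 0; 0, 1] * !![q, 0; 0, 1] = !![0, 0; 0, 1] := by
    ext i j
    fin_cases i <;> fin_cases j <;> simp
  rw [hu', hv', hE]
  rcases hu with hu | hu <;> rcases hv with hv | hv <;> rw [hu, hv]
  · exact hasNormalForm_of_eq 7 rfl rfl
  · exact hasNormalForm_of_eq 9 rfl rfl
  · exact hasNormalForm_of_eq 8 rfl rfl
  · exact hasNormalForm_of_eq 10 rfl rfl

theorem hasNormalForm_corner_of_one (u v : Fin 2 → K) (e : K) :
    HasNormalForm (bordered 1 u v e) (bordered 0 0 0 1) := by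
  refine (pencilEquiv_bordered_corner (h := 1) (k := 1) (by simp) (by simp) (-v) (-u) 1 u v
    e).hasNormalForm (hasNormalForm_of_eq 11 ?_ ?_) <;> simp [bordered, normalForm]

theorem hasNormalForm_corner (A : Matrix (Fin 3) (Fin 3) K) :
    HasNormalForm A (bordered 0 0 0 1) := by
  obtain ⟨E, u, v, e, rfl⟩ := exists_eq_bordered A
  suffices h : ∃ s : Finset (Fin 2), E.rank = s.card ∧ ∀ u v e,
      HasNormalForm (bordered (diagonal fun i => if i ∈ s then (1 : K) else 0) u v e)
        (bordered 0 0 0 1) by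
    obtain ⟨s, hs, h⟩ := h
    obtain ⟨P, Q, hP, hQ, hPQ⟩ := exists_mul_mul_eq_diagonal_ite_mem hs
    have := pencilEquiv_bordered_corner hP hQ 0 0 E u v e
    rw [hPQ] at this
    exact this.hasNormalForm (h _ _ _)
  have : E.rank ≤ 2 := E.rank_le_width
  interval_cases E.rank
  · exact ⟨∅, rfl, by simpa using hasNormalForm_corner_of_zero⟩
  · refine ⟨{1}, rfl, ?_⟩
    convert hasNormalForm_corner_of_rank_one (K := K) using 5
    ext i j
    fin_cases i <;> fin_cases j <;> rfl
  · exact ⟨Finset.univ, rfl, by simpa using hasNormalForm_corner_of_one⟩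

theorem hasNormalForm_of_rank_le_one (A : Matrix (Fin 3) (Fin 3) K) {B : Matrix (Fin 3) (Fin 3) K}
    (hB : B.rank ≤ 1) : HasNormalForm A B := by
  rcases Nat.le_one_iff_eq_zero_or_eq_one.1 hB with h₀ | h₁
  · rw [(matrix_rank_eq_zero_iff B).1 h₀]
    exact hasNormalForm_zero A
  · obtain ⟨P, Q, hP, hQ, hPQ⟩ := exists_mul_mul_eq_diagonal_ite_mem (s := {2}) h₁
    have hB' : P * B * Q = bordered 0 0 0 1 := by
      rw [hPQ]
      ext i j
      fin_cases i <;> fin_cases j <;> rfl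
    exact (PencilEquiv.mul_mul hP hQ A B).hasNormalForm (hB' ▸ hasNormalForm_corner _)

end RankOneMember

section RankTwoMember

variable {K : Type*} [Field K]

theorem hasNormalForm_of_rank_le_one_left {A : Matrix (Fin 3) (Fin 3) K} (hA : A.rank ≤ 1)
    (B : Matrix (Fin 3) (Fin 3) K) : HasNormalForm A B :=
  (PencilEquiv.swap A B).hasNormalForm (hasNormalForm_of_rank_le_one B hA)

theorem pencilEquiv_bordered_conj {g h : Matrix (Fin 2) (Fin 2) K} (hgh : g * h = 1) {c c' : K}
    (hc : c ≠ 0) (hc' : c' ≠ 0) (M : Matrix (Fin 2) (Fin 2) K) (u v : Fin 2 → K) (e : K) :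
    PencilEquiv (bordered M u v e) (bordered 1 0 0 0)
      (bordered (g * M * h) (c' • g *ᵥ u) (c • v ᵥ* h) (c * c' * e)) (bordered 1 0 0 0) := by
  have hdet : g.det * h.det = 1 := by rw [← det_mul, hgh, det_one]
  have hP : (bordered g 0 0 c).det ≠ 0 := by
    rw [det_bordered_zero_row]
    exact mul_ne_zero (left_ne_zero_of_mul_eq_one hdet) hc
  have hQ : (bordered h 0 0 c').det ≠ 0 := by
    rw [det_bordered_zero_row]
    exact mul_ne_zero (right_ne_zero_of_mul_eq_one hdet) hc'
  convert PencilEquiv.mul_mul hP hQ (bordered M u v e) (bordered 1 0 0 0) using 1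
  · simp [bordered_mul_bordered, smul_vecMul, mul_right_comm]
  · simp [bordered_mul_bordered, hgh]

theorem pencilEquiv_bordered_shear (w w' : Fin 2 → K) (M : Matrix (Fin 2) (Fin 2) K)
    (u v : Fin 2 → K) (e : K) :
    PencilEquiv (bordered M u v e) (bordered 1 0 0 0)
      (bordered (M + vecMulVec w v + vecMulVec (u + e • w) w') (u + e • w) (v + e • w') e)
      (bordered 1 0 0 0) := by
  have hP : (bordered 1 w 0 1).det ≠ 0 := by simp [det_bordered_zero_row]
  have hQ : (bordered 1 0 w' 1).det ≠ 0 := by simp [det_bordered_zero_column]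
  convert PencilEquiv.mul_mul hP hQ (bordered M u v e) (bordered 1 0 0 0) using 1
  · simp [bordered_mul_bordered]
  · simp [bordered_mul_bordered]

theorem pencilEquiv_bordered_shift (s : K) (M : Matrix (Fin 2) (Fin 2) K) (u v : Fin 2 → K)
    (e : K) :
    PencilEquiv (bordered M u v e) (bordered 1 0 0 0) (bordered (M + s • 1) u v e)
      (bordered 1 0 0 0) := by
  convert PencilEquiv.add_smul s (bordered M u v e) (bordered 1 0 0 0) using 1
  simp [bordered_add_smul_bordered]

theorem exists_mulVec_eq_vecMul_eq {u : Fin 2 → K} (hu : u ≠ 0) (v : Fin 2 → K) :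
    ∃ g h : Matrix (Fin 2) (Fin 2) K, g * h = 1 ∧ g *ᵥ u = ![1, 0] ∧
      (v ᵥ* h = ![v ⬝ᵥ u, 0] ∨ v ᵥ* h = ![0, 1]) := by
  obtain ⟨g, hg, hgu⟩ := exists_mulVec_eq hu
  have hgg : g * g⁻¹ = 1 := mul_nonsing_inv g hg.isUnit
  obtain ⟨t, s, hts⟩ : ∃ t s, v ᵥ* g⁻¹ = ![t, s] := ⟨_, _, (FinVec.etaExpand_eq _).symm⟩
  have ht : v ⬝ᵥ u = t := by
    have hu' : u = g⁻¹ *ᵥ ![1, 0] := by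
      rw [← hgu, mulVec_mulVec, nonsing_inv_mul g hg.isUnit, one_mulVec]
    rw [hu', dotProduct_mulVec, hts]
    simp [dotProduct]
  suffices h : ∃ p q : Matrix (Fin 2) (Fin 2) K, p * q = 1 ∧ p *ᵥ ![1, 0] = ![1, 0] ∧
      (![t, s] ᵥ* q = ![t, 0] ∨ ![t, s] ᵥ* q = ![0, 1]) by
    obtain ⟨p, q, hpq, hp, hq⟩ := h
    refine ⟨p * g, g⁻¹ * q, ?_, ?_, ?_⟩
    · rw [Matrix.mul_assoc, ← Matrix.mul_assoc g, hgg, Matrix.one_mul, hpq]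
    · rw [← mulVec_mulVec, hgu, hp]
    · rwa [← vecMul_vecMul, hts, ht]
  by_cases h₀ : t = 0
  · by_cases hs : s = 0
    · exact ⟨1, 1, by simp, by simp, by simp [hs]⟩
    · exact ⟨!![1, 0; 0, s], !![1, 0; 0, s⁻¹], by simp [hs, one_fin_two],
        by ext i; fin_cases i <;> simp, Or.inr (by simp [h₀, hs])⟩
  · exact ⟨!![1, s / t; 0, 1], !![1, -s / t; 0, 1], by simp [one_fin_two, neg_div],
      by ext i; fin_cases i <;> simp, Or.inl (by simp [field])⟩

theorem exists_det_add_smul_eq_zero [IsAlgClosed K] {n : Type*} [Fintype n] [DecidableEq n]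
    [Nonempty n] (A : Matrix n n K) {B : Matrix n n K} (hB : B.det ≠ 0) :
    ∃ s : K, (A + s • B).det = 0 := by
  obtain ⟨s, hs⟩ := IsAlgClosed.exists_root (A * B⁻¹).charpoly
    (by simp [charpoly_degree_eq_dim])
  rw [Polynomial.IsRoot, eval_charpoly] at hs
  refine ⟨-s, ?_⟩
  have h : A + -s • B = -((scalar n s - A * B⁻¹) * B) := by
    rw [Matrix.sub_mul, nonsing_inv_mul_cancel_right _ _ hB.isUnit, scalar_apply,
      ← smul_eq_diagonal_mul, neg_sub, neg_smul, sub_eq_add_neg]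
  rw [h, det_neg, det_mul, hs, zero_mul, mul_zero]

theorem hasNormalForm_bordered_vecMulVec (u v : Fin 2 → K) (e : K) :
    HasNormalForm (bordered (vecMulVec u v) 0 0 e) (bordered 1 0 0 0) := by
  have hzero (e : K) : HasNormalForm (bordered 0 0 0 e) (bordered 1 0 0 0) := by
    have hA : bordered 0 0 0 e = vecMulVec ![0, 0, 1] ![0, 0, e] := by
      ext i j
      fin_cases i <;> fin_cases j <;> simp [bordered, vecMulVec_apply]
    exact hasNormalForm_of_rank_le_one_left (hA ▸ rank_vecMulVec_le _ _) _
  by_cases hu : u = 0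
  · rw [hu, zero_vecMulVec]
    exact hzero e
  by_cases he : e = 0
  · have hA : bordered (vecMulVec u v) 0 0 e = vecMulVec ![u 0, u 1, 0] ![v 0, v 1, 0] := by
      ext i j
      fin_cases i <;> fin_cases j <;> simp [bordered, vecMulVec_apply, he]
    exact hasNormalForm_of_rank_le_one_left (hA ▸ rank_vecMulVec_le _ _) _
  obtain ⟨g, h, hgh, hgu, hvh⟩ := exists_mulVec_eq_vecMul_eq hu v
  generalize v ⬝ᵥ u = t at hvh
  have hconj {c : K} (hc : c ≠ 0) := pencilEquiv_bordered_conj hgh hc one_ne_zero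
    (vecMulVec u v) 0 0 e
  simp only [mul_vecMulVec, vecMulVec_mul, hgu, mulVec_zero, zero_vecMul, smul_zero, mul_one]
    at hconj
  rcases hvh with hvh | hvh <;> rw [hvh] at hconj
  · by_cases ht : t = 0
    · refine (hconj one_ne_zero).hasNormalForm ?_
      convert hzero (1 * e) using 2
      ext i j
      fin_cases j <;> simp [vecMulVec_apply, ht]
    · refine ((hconj (div_ne_zero ht he)).trans
        (.smul_smul (inv_ne_zero ht) one_ne_zero _ _)).hasNormalForm (hasNormalForm_of_eq 17 ?_ ?_)
      all_goals ext i j; fin_cases i <;> fin_cases j <;> simp [bordered, normalForm, ht, he]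
  · refine (hconj (inv_ne_zero he)).hasNormalForm (hasNormalForm_of_eq 16 ?_ ?_)
    all_goals ext i j; fin_cases i <;> fin_cases j <;> simp [bordered, normalForm, he]

theorem hasNormalForm_bordered_block [IsAlgClosed K] (M : Matrix (Fin 2) (Fin 2) K) (e : K) :
    HasNormalForm (bordered M 0 0 e) (bordered 1 0 0 0) := by
  obtain ⟨s, hs⟩ := exists_det_add_smul_eq_zero M (B := 1) (by simp)
  obtain ⟨u, v, huv⟩ := exists_eq_vecMulVec_of_rank_le_one
    (Nat.le_of_lt_succ ((rank_lt_card_iff_det_eq_zero _).2 hs))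
  refine (pencilEquiv_bordered_shift s M 0 0 e).hasNormalForm ?_
  rw [huv]
  exact hasNormalForm_bordered_vecMulVec u v e

theorem hasNormalForm_bordered_of_ne_zero [IsAlgClosed K] (M : Matrix (Fin 2) (Fin 2) K)
    (u v : Fin 2 → K) {e : K} (he : e ≠ 0) :
    HasNormalForm (bordered M u v e) (bordered 1 0 0 0) := by
  refine (pencilEquiv_bordered_shear (-e⁻¹ • u) (-e⁻¹ • v) M u v e).hasNormalForm ?_
  have cancel (x : Fin 2 → K) : x + e • -e⁻¹ • x = 0 := by
    rw [smul_smul, mul_neg, mul_inv_cancel₀ he, neg_one_smul, add_neg_cancel]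
  rw [cancel, cancel]
  exact hasNormalForm_bordered_block _ e

theorem hasNormalForm_bordered_e₁_e₂ (M : Matrix (Fin 2) (Fin 2) K) :
    HasNormalForm (bordered M ![1, 0] ![0, 1] 0) (bordered 1 0 0 0) := by
  obtain ⟨c, h⟩ : ∃ c, PencilEquiv (bordered M ![1, 0] ![0, 1] 0) (bordered 1 0 0 0)
      (bordered !![0, 0; c, 0] ![1, 0] ![0, 1] 0) (bordered 1 0 0 0) := by
    refine ⟨M 1 0, ?_⟩
    convert pencilEquiv_bordered_shear ![0, -M 1 1] ![-M 0 0, -M 0 1] M ![1, 0] ![0, 1] 0 using 1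
    ext i j
    fin_cases i <;> fin_cases j <;> simp [bordered]
  refine h.hasNormalForm ?_
  by_cases hc : c = 0
  · rw [hc]
    exact hasNormalForm_of_eq 14 rfl
      (by ext i j; fin_cases i <;> fin_cases j <;> rfl)
  · have hgh : !![c, 0; 0, 1] * !![c⁻¹, 0; 0, 1] = 1 := by simp [hc, one_fin_two]
    refine (pencilEquiv_bordered_conj hgh one_ne_zero (inv_ne_zero hc) _ _ _ _).hasNormalForm
      (hasNormalForm_of_eq 15 ?_ ?_)
    all_goals ext i j; fin_cases i <;> fin_cases j <;> simp [bordered, normalForm, hc]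

theorem hasNormalForm_bordered_e₁_smul_e₁ (M : Matrix (Fin 2) (Fin 2) K) {t : K} (ht : t ≠ 0) :
    HasNormalForm (bordered M ![1, 0] ![t, 0] 0) (bordered 1 0 0 0) := by
  have h : PencilEquiv (bordered M ![1, 0] ![t, 0] 0) (bordered 1 0 0 0)
      (bordered 0 ![1, 0] ![t, 0] 0) (bordered 1 0 0 0) := by
    convert (pencilEquiv_bordered_shift (-M 1 1) M ![1, 0] ![t, 0] 0).trans
      (pencilEquiv_bordered_shear ![0, -M 1 0 / t] ![-(M 0 0 + -M 1 1), -M 0 1] _ _ _ _) using 1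
    ext i j
    fin_cases i <;> fin_cases j <;> simp [bordered, ht]
  have h' : PencilEquiv (bordered 0 ![1, 0] ![t, 0] 0) (bordered 1 0 0 0)
      (bordered 0 ![1, 0] ![1, 0] 0) (bordered 1 0 0 0) := by
    simpa [ht] using pencilEquiv_bordered_conj (K := K) (one_mul 1) (inv_ne_zero ht) one_ne_zero
      0 ![1, 0] ![t, 0] 0
  refine ((h.trans h').trans ((PencilEquiv.swap _ _).trans (.submatrix (.swap 1 2)
    (.swap 0 2 * .swap 1 2) _ _))).hasNormalForm (hasNormalForm_of_eq 16 ?_ ?_)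
  all_goals ext i j; fin_cases i <;> fin_cases j <;> rfl

theorem hasNormalForm_bordered_e₁_zero (M : Matrix (Fin 2) (Fin 2) K) :
    HasNormalForm (bordered M ![1, 0] 0 0) (bordered 1 0 0 0) := by
  obtain ⟨c, h⟩ : ∃ c, PencilEquiv (bordered M ![1, 0] 0 0) (bordered 1 0 0 0)
      (bordered !![0, 0; c, 0] ![1, 0] 0 0) (bordered 1 0 0 0) := by
    refine ⟨M 1 0, ?_⟩
    convert (pencilEquiv_bordered_shift (-M 1 1) M ![1, 0] 0 0).trans
      (pencilEquiv_bordered_shear 0 ![-(M 0 0 + -M 1 1), -M 0 1] _ _ _ _) using 1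
    ext i j
    fin_cases i <;> fin_cases j <;> simp [bordered]
  refine h.hasNormalForm ?_
  by_cases hc : c = 0
  · have hA : bordered !![0, 0; c, 0] ![1, 0] 0 0 = vecMulVec ![1, 0, 0] ![0, 0, 1] := by
      ext i j
      fin_cases i <;> fin_cases j <;> simp [bordered, vecMulVec_apply, hc]
    exact hasNormalForm_of_rank_le_one_left (hA ▸ rank_vecMulVec_le _ _) _
  · have hgh : !![c, 0; 0, 1] * !![c⁻¹, 0; 0, 1] = 1 := by simp [hc, one_fin_two]
    refine (pencilEquiv_bordered_conj hgh one_ne_zero (inv_ne_zero hc) _ _ _ _).hasNormalForm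
      (hasNormalForm_of_eq 12 ?_ ?_)
    all_goals ext i j; fin_cases i <;> fin_cases j <;> simp [bordered, normalForm, hc]

theorem hasNormalForm_bordered_of_column_ne_zero (M : Matrix (Fin 2) (Fin 2) K) {u : Fin 2 → K}
    (hu : u ≠ 0) (v : Fin 2 → K) : HasNormalForm (bordered M u v 0) (bordered 1 0 0 0) := by
  obtain ⟨g, h, hgh, hgu, hvh⟩ := exists_mulVec_eq_vecMul_eq hu v
  refine (pencilEquiv_bordered_conj hgh one_ne_zero one_ne_zero M u v 0).hasNormalForm ?_
  rw [one_smul, one_smul, hgu, mul_zero]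
  rcases hvh with hvh | hvh <;> rw [hvh]
  · by_cases ht : v ⬝ᵥ u = 0
    · convert hasNormalForm_bordered_e₁_zero (g * M * h) using 2
      simp [ht]
    · exact hasNormalForm_bordered_e₁_smul_e₁ _ ht
  · exact hasNormalForm_bordered_e₁_e₂ _

theorem hasNormalForm_bordered_one [IsAlgClosed K] (A : Matrix (Fin 3) (Fin 3) K) :
    HasNormalForm A (bordered 1 0 0 0) := by
  obtain ⟨M, u, v, e, rfl⟩ := exists_eq_bordered A
  by_cases he : e = 0
  · subst he
    by_cases hu : u = 0
    · subst hu
      by_cases hv : v = 0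
      · exact hv ▸ hasNormalForm_bordered_block M 0
      · refine .of_transpose ?_
        rw [transpose_bordered, transpose_bordered, transpose_one]
        exact hasNormalForm_bordered_of_column_ne_zero _ hv 0
    · exact hasNormalForm_bordered_of_column_ne_zero M hu v
  · exact hasNormalForm_bordered_of_ne_zero M u v he

theorem hasNormalForm_of_det_eq_zero [IsAlgClosed K] (A : Matrix (Fin 3) (Fin 3) K)
    {B : Matrix (Fin 3) (Fin 3) K} (hB : B.det = 0) : HasNormalForm A B := by
  have hrank : B.rank < 3 := (rank_lt_card_iff_det_eq_zero B).2 hB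
  by_cases h : B.rank ≤ 1
  · exact hasNormalForm_of_rank_le_one A h
  · obtain ⟨P, Q, hP, hQ, hPQ⟩ := exists_mul_mul_eq_diagonal_ite_mem (M := B)
      (s := ({0, 1} : Finset (Fin 3))) (by simp; omega)
    have hB' : P * B * Q = bordered 1 0 0 0 := by
      rw [hPQ]
      ext i j
      fin_cases i <;> fin_cases j <;> rfl
    exact (PencilEquiv.mul_mul hP hQ A B).hasNormalForm (hB' ▸ hasNormalForm_bordered_one _)

theorem hasNormalForm [IsAlgClosed K] (A B : Matrix (Fin 3) (Fin 3) K) : HasNormalForm A B := by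
  by_cases hB : B.det = 0
  · exact hasNormalForm_of_det_eq_zero A hB
  · obtain ⟨s, hs⟩ := exists_det_add_smul_eq_zero A hB
    exact ((PencilEquiv.add_smul s A B).trans (.swap _ _)).hasNormalForm
      (hasNormalForm_of_det_eq_zero B hs)

end RankTwoMember

section Count

variable (K : Type*) [Field K]

/-- The tensor in `K² ⊗ K³ ⊗ K³` whose slices are the spanning matrices of the `i`-th normal
form. -/
def normalFormTensor (i : Fin 18) : (Fin 2 → K) ⊗[K] ((Fin 3 → K) ⊗[K] (Fin 3 → K)) :=
  (slices K (Fin 2) (Fin 3) (Fin 3)).symm ![(normalForm K i).1, (normalForm K i).2]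

variable {K} [IsAlgClosed K]

theorem tensorOrbitRel_normalFormTensor_iff
    (v : (Fin 2 → K) ⊗[K] ((Fin 3 → K) ⊗[K] (Fin 3 → K))) (i : Fin 18) :
    TensorOrbitRel v (normalFormTensor K i) ↔
      PencilEquiv (slices K _ _ _ v 0) (slices K _ _ _ v 1) (normalForm K i).1
        (normalForm K i).2 := by
  simp [tensorOrbitRel_iff_pencilEquiv, normalFormTensor]

theorem equivalence_tensorOrbitRel {m n : Type*} [Fintype m] [DecidableEq m] [Nonempty m]
    [Fintype n] [DecidableEq n] [Nonempty n] : Equivalence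
      (TensorOrbitRel : (Fin 2 → K) ⊗[K] ((m → K) ⊗[K] (n → K)) → _ → Prop) where
  refl v := (tensorOrbitRel_iff_pencilEquiv v v).2 (.refl _ _)
  symm {v w} h := (tensorOrbitRel_iff_pencilEquiv w v).2
    ((tensorOrbitRel_iff_pencilEquiv v w).1 h).symm
  trans {u v w} h h' := (tensorOrbitRel_iff_pencilEquiv u w).2
    (((tensorOrbitRel_iff_pencilEquiv u v).1 h).trans ((tensorOrbitRel_iff_pencilEquiv v w).1 h'))

variable (K) in
theorem bijective_mk_normalFormTensor :
    Function.Bijective fun i => Quot.mk TensorOrbitRel (normalFormTensor K i) := by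
  constructor
  · intro i j hij
    have h := equivalence_tensorOrbitRel.eqvGen_iff.1 (Quot.eqvGen_exact hij)
    rw [tensorOrbitRel_normalFormTensor_iff] at h
    refine eq_of_pencilEquiv_normalForm K ?_
    simpa [normalFormTensor] using h
  · rintro ⟨v⟩
    obtain ⟨i, hi⟩ := hasNormalForm (slices K _ _ _ v 0) (slices K _ _ _ v 1)
    exact ⟨i, (Quot.sound ((tensorOrbitRel_normalFormTensor_iff v i).2 hi)).symm⟩

end Count

theorem sl2_sl3_sl3_action_eighteen_orbits_general (K : Type*) [Field K] [IsAlgClosed K] :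
    Nat.card (Quot (TensorOrbitRel :
      (Fin 2 → K) ⊗[K] ((Fin 3 → K) ⊗[K] (Fin 3 → K)) → _ → Prop)) = 18 := by
  rw [← Nat.card_eq_of_bijective _ (bijective_mk_normalFormTensor K), Nat.card_fin]

/-- The action of `SL₂(ℂ) × SL₃(ℂ) × SL₃(ℂ) × ℂ^×` on `ℂ² ⊗ ℂ³ ⊗ ℂ³` has exactly
18 orbits. -/
theorem sl2_sl3_sl3_action_eighteen_orbits : Nat.card (Quot relT10) = 18 :=
  sl2_sl3_sl3_action_eighteen_orbits_general ℂ
end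
end

section
/- The GL_6(ℂ)-orbit of the element w = e_1∧e_2∧e_3 + e_4∧e_5∧e_6 in ⋀³ℂ⁶ is Zariski dense: every polynomial function on ⋀³ℂ⁶ (i.e., every polynomial in the 20 Plücker coordinates) that vanishes on the orbit {g·w : g ∈ GL_6(ℂ)} is identically zero. -/
noncomputable section

open ExteriorAlgebra

/-- The standard basis vectors of `ℂ⁶`. -/
def stdBasis6 (i : Fin 6) : Fin 6 → ℂ := Pi.single i 1

/-- The wedge `e_a ∧ e_b ∧ e_c`, an element of `⋀³ℂ⁶ ⊆ ⋀ℂ⁶`. -/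
def wedge3 (a b c : Fin 6) : ExteriorAlgebra ℂ (Fin 6 → ℂ) :=
  ExteriorAlgebra.ιMulti ℂ 3 ![stdBasis6 a, stdBasis6 b, stdBasis6 c]

/-!
Write `w = w₁ + w₂` with `w₁ = e₁∧e₂∧e₃`, `w₂ = e₄∧e₅∧e₆`. The differential at `1` of `g ↦ g • w`
is onto: it is `f ↦ f • w₁ + f • w₂` for the derivation action of `End V`, its image contains every
decomposable trivector obtained from `w₁` or `w₂` by replacing one factor, and any three of the six
basis vectors include two of `e₁, e₂, e₃` or two of `e₄, e₅, e₆`.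

Hence every `v` in `⋀³V` is the velocity at `w` of an arc `t ↦ (1 + t f) • w`, which is polynomial
in `t` and lies in the orbit for all but finitely many `t`. Such arcs are enough to force a
polynomial `p` to vanish: expand `p` at `w` into homogeneous components `p_d`; if `p_j` vanishes
for all `j < d`, then the coefficient of `t ^ d` in `p` along the arc of velocity `v` is `p_d v`.
-/

open Filter Module

section PolynomialArc

variable {K W σ : Type*} [Field K] [AddCommGroup W] [Module K W]

/-- `IsPolynomialArc γ w v` says that `γ : K → W` is a polynomial arc through `w` at time `0` with
velocity `v` there. It is encoded by the difference quotient `η`, which is a polynomial with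
coefficients in `W`; no derivative is taken, so the notion is meaningful in any characteristic. -/
def IsPolynomialArc (γ : K → W) (w v : W) : Prop :=
  ∃ η : PolynomialModule K W, PolynomialModule.eval 0 η = v ∧
    ∀ t, γ t = w + t • PolynomialModule.eval t η

lemma IsPolynomialArc.add {γ δ : K → W} {w w' v v' : W} (hγ : IsPolynomialArc γ w v)
    (hδ : IsPolynomialArc δ w' v') : IsPolynomialArc (fun t => γ t + δ t) (w + w') (v + v') := by
  obtain ⟨η, hη, hγ⟩ := hγ
  obtain ⟨θ, hθ, hδ⟩ := hδ
  refine ⟨η + θ, by rw [map_add, hη, hθ], fun t => ?_⟩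
  simp only [hγ, hδ, map_add]
  module

lemma isPolynomialArc_multilinearMap {ι : Type*} [Fintype ι] [DecidableEq ι] {M : ι → Type*}
    [∀ i, AddCommGroup (M i)] [∀ i, Module K (M i)] (f : MultilinearMap K M W) (x y : ∀ i, M i) :
    IsPolynomialArc (fun t : K => f (x + t • y)) (f x) (f.linearDeriv x y) := by
  refine ⟨.single K 0 (f.linearDeriv x y) +
    ∑ s : Finset ι with 2 ≤ s.card, .single K (s.card - 1) (f (s.piecewise y x)), ?_, fun t => ?_⟩
  · have hs (s : Finset ι) (h : 2 ≤ s.card) : (0 : K) ^ (s.card - 1) = 0 :=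
      zero_pow (by omega)
    simp +contextual [Finset.sum_eq_zero, hs]
  · have hs (s : Finset ι) (h : 2 ≤ s.card) :
        f (s.piecewise (t • y) x) = t • t ^ (s.card - 1) • f (s.piecewise y x) := by
      have := f.map_piecewise_smul (fun _ => t) (s.piecewise y x) s
      rw [Finset.prod_const, ← mul_pow_sub_one (by omega : s.card ≠ 0), mul_smul] at this
      rw [← this]
      congr 1
      ext i
      by_cases hi : i ∈ s <;> simp [hi]
    dsimp only
    rw [f.map_add_eq_map_add_linearDeriv_add, map_smul, map_add, map_sum, smul_add,
      Finset.smul_sum, add_assoc]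
    congr 2
    · simp
    · exact Finset.sum_congr rfl fun s h => by simpa using hs s (Finset.mem_filter.mp h).2

lemma exists_polynomial_eval_eq_eval_dual (φ : σ → Dual K W) (η : PolynomialModule K W)
    (p : MvPolynomial σ K) :
    ∃ P : Polynomial K, ∀ t,
      P.eval t = MvPolynomial.eval (fun i => φ i (PolynomialModule.eval t η)) p := by
  refine ⟨MvPolynomial.aeval
    (fun i => PolynomialModule.equivPolynomial (PolynomialModule.map K (φ i) η)) p, fun t => ?_⟩
  rw [← Polynomial.coe_evalRingHom, MvPolynomial.map_aeval]
  refine MvPolynomial.eval₂Hom_congr (by ext; simp) (funext fun i => ?_) rfl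
  rw [Polynomial.coe_evalRingHom, ← Polynomial.coe_aeval_eq_eval,
    PolynomialModule.aeval_equivPolynomial, PolynomialModule.eval_map']
  exact PolynomialModule.eval_map K (φ i) η t

lemma eval_smul_of_isHomogeneous {R : Type*} [CommSemiring R] {p : MvPolynomial σ R} {d : ℕ}
    (hp : p.IsHomogeneous d) (t : R) (x : σ → R) :
    MvPolynomial.eval (t • x) p = t ^ d * MvPolynomial.eval x p := by
  simp only [MvPolynomial.eval_eq, Finset.mul_sum, Pi.smul_apply, smul_eq_mul, mul_pow,
    Finset.prod_mul_distrib, Finset.prod_pow_eq_pow_sum]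
  refine Finset.sum_congr rfl fun m hm => ?_
  have hdeg : m.degree = d := by
    rw [Finsupp.degree_eq_weight_one]
    exact hp (MvPolynomial.mem_support_iff.mp hm)
  rw [← Finsupp.degree_apply, hdeg]
  ring

lemma coeff_zero_eq_zero_of_sum_X_pow_mul_eq_zero {R : Type*} [Semiring R] {s : Finset ℕ}
    {P : ℕ → Polynomial R} (h : ∑ j ∈ s, Polynomial.X ^ j * P j = 0) {d : ℕ} (hd : d ∈ s)
    (hlow : ∀ j < d, P j = 0) : (P d).coeff 0 = 0 := by
  have hcoeff := congrArg (Polynomial.coeff · d) h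
  simp only [Polynomial.finsetSum_coeff, Polynomial.coeff_X_pow_mul'] at hcoeff
  rw [Finset.sum_eq_single_of_mem d hd] at hcoeff
  · simpa using hcoeff
  · intro j _ hj
    rcases hj.lt_or_gt with hj | hj
    · simp [hlow j hj]
    · simp [hj.not_ge]

variable [Infinite K]

lemma eval_homogeneousComponent_eq_zero (φ : σ → Dual K W) (p : MvPolynomial σ K)
    (h : ∀ v, ∃ γ : K → W, IsPolynomialArc γ 0 v ∧
      ∀ᶠ t in cofinite, MvPolynomial.eval (fun i => φ i (γ t)) p = 0) (d : ℕ) :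
    ∀ v, MvPolynomial.eval (fun i => φ i v) (MvPolynomial.homogeneousComponent d p) = 0 := by
  induction d using Nat.strong_induction_on with
  | _ d ih =>
  intro v
  by_cases hd : p.totalDegree < d
  · rw [MvPolynomial.homogeneousComponent_eq_zero d p hd, map_zero]
  obtain ⟨γ, ⟨η, rfl, hγ⟩, hp⟩ := h v
  choose P hP using fun j =>
    exists_polynomial_eval_eq_eval_dual φ η (MvPolynomial.homogeneousComponent j p)
  have hscale (j : ℕ) (t : K) : MvPolynomial.eval (fun i => φ i (γ t))
      (MvPolynomial.homogeneousComponent j p) = t ^ j * (P j).eval t := by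
    rw [hP, ← eval_smul_of_isHomogeneous (MvPolynomial.homogeneousComponent_isHomogeneous j p)]
    congr with i
    simp [hγ]
  have hsum : ∑ j ∈ Finset.range (p.totalDegree + 1), Polynomial.X ^ j * P j = 0 := by
    refine Polynomial.eq_zero_of_infinite_isRoot _
      ((frequently_cofinite_iff_infinite.mp hp.frequently).mono fun t ht => ?_)
    rw [Set.mem_ofPred_eq, ← MvPolynomial.sum_homogeneousComponent p, map_sum] at ht
    simpa [Polynomial.eval_finsetSum, hscale] using ht
  rw [← hP, ← Polynomial.coeff_zero_eq_eval_zero]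
  refine coeff_zero_eq_zero_of_sum_X_pow_mul_eq_zero hsum (by simpa using hd) fun j hj => ?_
  exact Polynomial.funext fun t => by rw [hP, ih j hj, Polynomial.eval_zero]

theorem eval_dual_eq_zero_of_isPolynomialArc (φ : σ → Dual K W) (p : MvPolynomial σ K) (w : W)
    (h : ∀ v, ∃ γ : K → W, IsPolynomialArc γ w v ∧
      ∀ᶠ t in cofinite, MvPolynomial.eval (fun i => φ i (γ t)) p = 0) (v : W) :
    MvPolynomial.eval (fun i => φ i v) p = 0 := by
  let q : MvPolynomial σ K :=
    MvPolynomial.aeval (fun i => MvPolynomial.X i + MvPolynomial.C (φ i w)) p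
  have hq (x : W) :
      MvPolynomial.eval (fun i => φ i x) q = MvPolynomial.eval (fun i => φ i (x + w)) p := by
    rw [MvPolynomial.map_aeval]
    exact MvPolynomial.eval₂Hom_congr (by ext; simp) (by ext; simp) rfl
  have hzero : MvPolynomial.eval (fun i => φ i (v - w)) q = 0 := by
    rw [← MvPolynomial.sum_homogeneousComponent q, map_sum]
    refine Finset.sum_eq_zero fun d _ => eval_homogeneousComponent_eq_zero φ q (fun y => ?_) d _
    obtain ⟨γ, ⟨η, hη, hγ⟩, hp⟩ := h y
    refine ⟨fun t => t • PolynomialModule.eval t η, ⟨η, hη, by simp⟩, hp.mono fun t ht => ?_⟩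
    rw [hq, add_comm, ← hγ, ht]
  rwa [hq, sub_add_cancel] at hzero

end PolynomialArc

section Orbit

variable {K V W σ : Type*} [Field K] [AddCommGroup V] [Module K V] [FiniteDimensional K V]
  [AddCommGroup W] [Module K W]

lemma eventually_isUnit_one_add_smul (f : End K V) :
    ∀ᶠ t : K in cofinite, IsUnit (1 + t • f) := by
  have h : ∀ᶠ t : K in cofinite, t⁻¹ ∉ spectrum K (-f) :=
    inv_injective.tendsto_cofinite.eventually
      (Module.End.finite_spectrum _).eventually_cofinite_notMem
  filter_upwards [h, eventually_cofinite_ne 0] with t ht ht0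
  rw [spectrum.notMem_iff] at ht
  have := ht.smul (Units.mk0 t ht0)
  simpa [Units.smul_def, Algebra.algebraMap_eq_smul_one, smul_smul, ht0] using this

theorem eval_dual_eq_zero_of_forall_isUnit [Infinite K] (F : End K V → W) (w : W)
    (hF : ∀ v, ∃ f : End K V, IsPolynomialArc (fun t : K => F (1 + t • f)) w v)
    (φ : σ → Dual K W) (p : MvPolynomial σ K)
    (hp : ∀ g, IsUnit g → MvPolynomial.eval (fun i => φ i (F g)) p = 0) (v : W) :
    MvPolynomial.eval (fun i => φ i v) p = 0 := by
  refine eval_dual_eq_zero_of_isPolynomialArc φ p w (fun v => ?_) v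
  obtain ⟨f, hf⟩ := hF v
  exact ⟨_, hf, (eventually_isUnit_one_add_smul f).mono fun t => hp _⟩

end Orbit

section Wedge

variable {K V ι : Type*} [Field K] [AddCommGroup V] [Module K V] {k : ℕ}

variable (K) in
/-- The derivation action of the Lie algebra `End V` on the decomposable `k`-vector `x₁ ∧ ⋯ ∧ xₖ`,
that is, the differential at `1` of the orbit map `g ↦ g x₁ ∧ ⋯ ∧ g xₖ`. -/
def wedgeDeriv (x : Fin k → V) : End K V →ₗ[K] ⋀[K]^k V :=
  (exteriorPower.ιMulti K k).linearDeriv x ∘ₗ LinearMap.pi fun i => LinearMap.applyₗ (x i)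

lemma wedgeDeriv_apply (x : Fin k → V) (f : End K V) :
    wedgeDeriv K x f = ∑ i, exteriorPower.ιMulti K k (Function.update x i (f (x i))) := by
  simp [wedgeDeriv, MultilinearMap.linearDeriv_apply]

lemma isPolynomialArc_map_ιMulti (x : Fin k → V) (f : End K V) :
    IsPolynomialArc (fun t : K => exteriorPower.map k (1 + t • f) (exteriorPower.ιMulti K k x))
      (exteriorPower.ιMulti K k x) (wedgeDeriv K x f) := by
  simp_rw [exteriorPower.map_apply_ιMulti]
  exact isPolynomialArc_multilinearMap (exteriorPower.ιMulti K k).toMultilinearMap x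
    fun i => f (x i)

lemma ιMulti_update_mem_range_wedgeDeriv_add (b : Basis ι K V) {c c' : Fin k → ι}
    (hc : Function.Injective c) (hcc' : ∀ i j, c i ≠ c' j) (i : Fin k) (y : V) :
    exteriorPower.ιMulti K k (Function.update (b ∘ c) i y) ∈
      (wedgeDeriv K (b ∘ c) + wedgeDeriv K (b ∘ c')).range := by
  classical
  have hz (x : Fin k → V) (j : Fin k) : exteriorPower.ιMulti K k (Function.update x j 0) = 0 :=
    AlternatingMap.map_coord_zero _ j (by simp)
  refine ⟨b.constr K (Pi.single (c i) y), ?_⟩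
  rw [LinearMap.add_apply, wedgeDeriv_apply, wedgeDeriv_apply, Finset.sum_eq_single i,
    Finset.sum_eq_zero, add_zero]
  · simp
  · intro j _
    simp [(hcc' i j).symm, hz]
  · intro j _ hj
    simp [hc.ne hj, hz]
  · simp

lemma ιMulti_comp_perm_mem_iff (S : Submodule K (⋀[K]^k V)) (x : Fin k → V)
    (σ : Equiv.Perm (Fin k)) :
    exteriorPower.ιMulti K k (x ∘ σ) ∈ S ↔ exteriorPower.ιMulti K k x ∈ S := by
  rw [AlternatingMap.map_perm]
  exact S.smul_mem_iff' _

lemma exists_perm_forall_ne_eq (v : Fin 3 → Fin 6) (hv : Function.Injective v) :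
    ∃ (σ : Equiv.Perm (Fin 3)) (i : Fin 3),
      (∀ j ≠ i, v (σ j) = ![0, 1, 2] j) ∨ (∀ j ≠ i, v (σ j) = ![3, 4, 5] j) := by
  set_option maxRecDepth 10000 in
  revert v
  decide

lemma wedgeDeriv_add_surjective (b : Basis (Fin 6) K V) :
    Function.Surjective (wedgeDeriv K (b ∘ ![0, 1, 2]) + wedgeDeriv K (b ∘ ![3, 4, 5])) := by
  set T := wedgeDeriv K (b ∘ ![0, 1, 2]) + wedgeDeriv K (b ∘ ![3, 4, 5]) with hT
  have h₁ (i : Fin 3) (y : V) :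
      exteriorPower.ιMulti K 3 (Function.update (b ∘ ![0, 1, 2]) i y) ∈ T.range :=
    ιMulti_update_mem_range_wedgeDeriv_add b (by decide) (by decide) i y
  have h₂ (i : Fin 3) (y : V) :
      exteriorPower.ιMulti K 3 (Function.update (b ∘ ![3, 4, 5]) i y) ∈ T.range := by
    rw [hT, add_comm]
    exact ιMulti_update_mem_range_wedgeDeriv_add b (by decide) (by decide) i y
  rw [← LinearMap.range_eq_top, eq_top_iff, ← exteriorPower.ιMulti_family_span_of_span K b.span_eq,
    Submodule.span_le]
  rintro _ ⟨s, rfl⟩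
  set v := Set.powersetCard.ofFinEmbEquiv.symm s
  obtain ⟨σ, i, h⟩ := exists_perm_forall_ne_eq v v.injective
  refine (ιMulti_comp_perm_mem_iff _ (b ∘ v) σ).mp ?_
  have heq {c : Fin 3 → Fin 6} (h : ∀ j ≠ i, v (σ j) = c j) :
      (b ∘ v) ∘ σ = Function.update (b ∘ c) i (b (v (σ i))) :=
    Function.eq_update_iff.mpr ⟨rfl, fun j hj => congrArg b (h j hj)⟩
  rcases h with h | h
  · exact heq h ▸ h₁ _ _
  · exact heq h ▸ h₂ _ _

end Wedge

theorem orbit_of_generic_trivector_is_dense_general {K V σ : Type*} [Field K] [Infinite K]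
    [AddCommGroup V] [Module K V] (b : Basis (Fin 6) K V) (φ : σ → Dual K (ExteriorAlgebra K V))
    (p : MvPolynomial σ K)
    (hvanish : ∀ g : V ≃ₗ[K] V, MvPolynomial.eval (fun i => φ i (ExteriorAlgebra.map (g : V →ₗ[K] V)
      (ExteriorAlgebra.ιMulti K 3 ![b 0, b 1, b 2] +
        ExteriorAlgebra.ιMulti K 3 ![b 3, b 4, b 5]))) p = 0) :
    ∀ v ∈ ⋀[K]^3 V, MvPolynomial.eval (fun i => φ i v) p = 0 := by
  have := b.finiteDimensional_of_finite
  intro v hv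
  refine eval_dual_eq_zero_of_forall_isUnit
    (fun g => exteriorPower.map 3 g (exteriorPower.ιMulti K 3 (b ∘ ![0, 1, 2])) +
      exteriorPower.map 3 g (exteriorPower.ιMulti K 3 (b ∘ ![3, 4, 5])))
    (exteriorPower.ιMulti K 3 (b ∘ ![0, 1, 2]) + exteriorPower.ιMulti K 3 (b ∘ ![3, 4, 5]))
    (fun u => ?_) (fun i => φ i ∘ₗ (⋀[K]^3 V).subtype) p ?_ ⟨v, hv⟩
  · obtain ⟨f, rfl⟩ := wedgeDeriv_add_surjective b u
    exact ⟨f, (isPolynomialArc_map_ιMulti _ f).add (isPolynomialArc_map_ιMulti _ f)⟩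
  · intro g hg
    have hvec (i j l : Fin 6) : ![b i, b j, b l] = b ∘ ![i, j, l] := by
      ext m
      fin_cases m <;> rfl
    obtain ⟨e, rfl⟩ : ∃ e : V ≃ₗ[K] V, e = g :=
      ⟨.ofBijective g ((End.isUnit_iff g).mp hg), rfl⟩
    have := hvanish e
    simp only [hvec, map_add, ExteriorAlgebra.map_apply_ιMulti] at this
    simpa only [exteriorPower.map_apply_ιMulti, map_add, LinearMap.comp_apply,
      Submodule.subtype_apply, exteriorPower.ιMulti_apply_coe] using this

/-- The `GL₆(ℂ)`-orbit of `w = e₁∧e₂∧e₃ + e₄∧e₅∧e₆` is Zariski dense in `⋀³ℂ⁶`: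
every polynomial expression in linear coordinates that vanishes at every point of
the orbit vanishes at every point of `⋀³ℂ⁶`. -/
theorem orbit_of_generic_trivector_is_dense
    (n : ℕ) (φ : Fin n → (ExteriorAlgebra ℂ (Fin 6 → ℂ) →ₗ[ℂ] ℂ))
    (p : MvPolynomial (Fin n) ℂ)
    (hvanish : ∀ g : (Fin 6 → ℂ) ≃ₗ[ℂ] (Fin 6 → ℂ),
      MvPolynomial.eval
        (fun i => φ i (ExteriorAlgebra.map (g : (Fin 6 → ℂ) →ₗ[ℂ] (Fin 6 → ℂ))
          (wedge3 0 1 2 + wedge3 3 4 5))) p = 0) :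
    ∀ v ∈ ⋀[ℂ]^3 (Fin 6 → ℂ), MvPolynomial.eval (fun i => φ i v) p = 0 :=
  orbit_of_generic_trivector_is_dense_general (Pi.basisFun ℂ (Fin 6)) φ p
    (by simpa [wedge3, stdBasis6] using hvanish)
end
end
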